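/- arXiv:2304.08473 — 2 statements merged into one kernel-verified Lean document; each statement's English description precedes it below -/
import Mathlib

section
/- Let R be a finite commutative principal ideal ring, A an r×n matrix over R whose rows are linearly independent, and y ∈ R^n. Then y belongs to the row span of A if and only if every (r+1)×(r+1) minor of the (r+1)×n matrix obtained by stacking y on top of A vanishes. -/
/-!
By Cramer's rule every maximal minor `d` of `A` satisfies `d • y ∈ row(A)` as soon as the minors of
the stacked matrix vanish, so it is enough that the maximal minors of `A` generate the unit ideal.
Cofactor expansion shows that an element annihilating all maximal minors of a matrix with
independent rows is zero (McCoy). In a zero-dimensional ring every prime is minimal, and a finitely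
generated ideal inside a minimal prime is annihilated by a nonzero element; hence the ideal of
maximal minors lies in no maximal ideal.
-/

section MinimalPrimes

open Polynomial

variable {R : Type*} [CommRing R] {p : Ideal R}

theorem map_C_mem_minimalPrimes (hp : p ∈ minimalPrimes R) :
    p.map (C : R →+* R[X]) ∈ minimalPrimes R[X] := by
  have := hp.isPrime
  refine ⟨⟨Ideal.isPrime_map_C_of_isPrime, bot_le⟩, fun Q ⟨hQ, _⟩ hQp => ?_⟩
  have comap_le : Q.comap C ≤ p := fun x hx => by
    simpa using Ideal.mem_map_C_iff.1 (hQp hx) 0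
  exact Ideal.map_le_iff_le_comap.2 (hp.2 ⟨hQ.comap C, bot_le⟩ comap_le)

-- A polynomial whose coefficients generate `I` lies in a minimal prime of `R[X]`, hence is a zero
-- divisor, and McCoy's theorem on polynomials provides a constant annihilating it.
theorem exists_ne_zero_forall_mul_eq_zero_of_fg_of_le_minimalPrime (hp : p ∈ minimalPrimes R)
    {I : Ideal R} (hI : I.FG) (hIp : I ≤ p) : ∃ a ≠ 0, ∀ x ∈ I, a * x = 0 := by
  classical
  obtain ⟨k, s, rfl⟩ := Submodule.fg_iff_exists_fin_generating_family.1 hI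
  have f_mem : ofFn k s ∈ p.map C := Ideal.mem_map_C_iff.2 fun i => by
    by_cases hi : i < k
    · rw [ofFn_coeff_eq_val_of_lt s hi]
      exact hIp (Submodule.subset_span ⟨_, rfl⟩)
    · rw [ofFn_coeff_eq_zero_of_ge s (not_lt.1 hi)]
      exact p.zero_mem
  obtain ⟨a, ha, haf⟩ := Polynomial.notMem_nonZeroDivisors_iff.1
    (notMem_nonZeroDivisors_of_mem_mem_minimalPrimes f_mem (map_C_mem_minimalPrimes hp))
  have span_le : Submodule.span R (Set.range s) ≤ LinearMap.ker (LinearMap.mulLeft R a) := by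
    rw [Submodule.span_le]
    rintro _ ⟨i, rfl⟩
    simpa [ofFn_coeff_eq_val_of_lt s i.2] using congr_arg (coeff · i) haf
  exact ⟨a, ha, span_le⟩

end MinimalPrimes

section Minors

open Matrix

variable {R ι : Type*} [CommRing R] {r : ℕ}

theorem det_submatrix_eq_zero_of_strictMono [LinearOrder ι] {B : Matrix (Fin r) ι R}
    (hB : ∀ g : Fin r → ι, StrictMono g → (B.submatrix id g).det = 0) (g : Fin r → ι) :
    (B.submatrix id g).det = 0 := by
  by_cases hg : Function.Injective g
  · have sorted_minor : (B.submatrix id (g ∘ Tuple.sort g)).det = 0 :=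
      hB _ ((Tuple.monotone_sort g).strictMono_of_injective (hg.comp (Tuple.sort g).injective))
    have sign_mul : (B.submatrix id (g ∘ Tuple.sort g)).det =
        Equiv.Perm.sign (Tuple.sort g) * (B.submatrix id g).det :=
      det_permute' (Tuple.sort g) (B.submatrix id g)
    rw [sorted_minor] at sign_mul
    exact ((Equiv.Perm.sign (Tuple.sort g)).isUnit.map
      (Int.castRingHom R)).mul_right_eq_zero.1 sign_mul.symm
  · obtain ⟨i, j, hij, hne⟩ := Function.not_injective_iff.1 hg
    exact det_zero_of_column_eq hne fun k => by simp only [submatrix_apply, hij]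

theorem alternatingMap_vecCons_eq_zero_of_mem_span {S M N : Type*} [CommSemiring S]
    [AddCommMonoid M] [Module S M] [AddCommMonoid N] [Module S N]
    (f : M [⋀^Fin (r + 1)]→ₗ[S] N) {v : Fin r → M} {y : M}
    (hy : y ∈ Submodule.span S (Set.range v)) : f (vecCons y v) = 0 := by
  induction hy using Submodule.span_induction with
  | mem x hx =>
    obtain ⟨i, rfl⟩ := hx
    exact f.map_eq_zero_of_eq (vecCons (v i) v) (i := 0) (j := i.succ) rfl (Fin.succ_ne_zero i).symm
  | zero => exact f.map_coord_zero 0 rfl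
  | add x z _ _ hx hz => rw [f.map_vecCons_add, hx, hz, add_zero]
  | smul a x _ hx => rw [f.map_vecCons_smul, hx, smul_zero]

theorem det_submatrix_cons_eq_zero_of_mem_span {A : Matrix (Fin r) ι R} {y : ι → R}
    (hy : y ∈ Submodule.span R (Set.range A)) (g : Fin (r + 1) → ι) :
    ((Matrix.of (Fin.cons y A)).submatrix id g).det = 0 :=
  alternatingMap_vecCons_eq_zero_of_mem_span
    (detRowAlternating.compLinearMap (LinearMap.funLeft R R g)) hy

theorem sum_minor_smul_row (B : Matrix (Fin (r + 1)) ι R) (g : Fin r → ι) :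
    ∑ i : Fin (r + 1), ((-1) ^ (i : ℕ) * (B.submatrix i.succAbove g).det) • B i =
      fun j => (B.submatrix id (Fin.cons j g : Fin (r + 1) → ι)).det := by
  ext j
  rw [det_succ_column_zero, Finset.sum_apply]
  refine Finset.sum_congr rfl fun i _ => ?_
  exact mul_right_comm _ _ _

/-- The ideal generated by the minors of full height. Columns may be selected in any order and with
repetitions, which contributes only signs and zeros. -/
def maximalMinorIdeal (A : Matrix (Fin r) ι R) : Ideal R :=
  Ideal.span (Set.range fun g : Fin r → ι => (A.submatrix id g).det)

theorem det_submatrix_mem_maximalMinorIdeal (A : Matrix (Fin r) ι R) (g : Fin r → ι) :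
    (A.submatrix id g).det ∈ maximalMinorIdeal A :=
  Ideal.subset_span ⟨g, rfl⟩

theorem maximalMinorIdeal_fg [Finite ι] (A : Matrix (Fin r) ι R) : (maximalMinorIdeal A).FG :=
  Submodule.fg_span (Set.finite_range _)

theorem eq_zero_of_forall_mul_det_submatrix_eq_zero {A : Matrix (Fin r) ι R}
    (hA : LinearIndependent R A) {a : R}
    (ha : ∀ g : Fin r → ι, a * (A.submatrix id g).det = 0) : a = 0 := by
  induction r with
  | zero => simpa using ha Fin.elim0
  | succ r ih =>
    refine ih (A := A.submatrix Fin.succ id) (hA.comp _ (Fin.succ_injective r)) fun g => ?_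
    have relation : ∑ i : Fin (r + 1),
        (a * ((-1) ^ (i : ℕ) * (A.submatrix i.succAbove g).det)) • A i = 0 := by
      simp only [mul_smul a, ← Finset.smul_sum, sum_minor_smul_row]
      exact funext fun j => ha _
    simpa using Fintype.linearIndependent_iff.1 hA _ relation 0

theorem maximalMinorIdeal_eq_top [Ring.KrullDimLE 0 R] [Finite ι] {A : Matrix (Fin r) ι R}
    (hA : LinearIndependent R A) : maximalMinorIdeal A = ⊤ := by
  by_contra hne
  obtain ⟨m, hm, hle⟩ := Ideal.exists_le_maximal _ hne
  obtain ⟨a, ha, annihilates⟩ := exists_ne_zero_forall_mul_eq_zero_of_fg_of_le_minimalPrime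
    (Ideal.mem_minimalPrimes_iff_isPrime.2 hm.isPrime) (maximalMinorIdeal_fg A) hle
  exact ha (eq_zero_of_forall_mul_det_submatrix_eq_zero hA fun g =>
    annihilates _ (det_submatrix_mem_maximalMinorIdeal A g))

theorem maximalMinorIdeal_le_colon {A : Matrix (Fin r) ι R} {y : ι → R}
    (h : ∀ g : Fin (r + 1) → ι, ((Matrix.of (Fin.cons y A)).submatrix id g).det = 0) :
    maximalMinorIdeal A ≤ (Submodule.span R (Set.range A)).colon {y} := by
  refine Ideal.span_le.2 ?_
  rintro _ ⟨g, rfl⟩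
  rw [SetLike.mem_coe, Submodule.mem_colon_singleton]
  have relation : (A.submatrix id g).det • y + ∑ i : Fin r, ((-1) ^ (i.succ : ℕ) *
      ((Matrix.of (Fin.cons y A)).submatrix i.succ.succAbove g).det) • A i = 0 := by
    have expansion := sum_minor_smul_row (Matrix.of (Fin.cons y A)) g
    simp only [h, Fin.sum_univ_succ, Fin.val_zero, pow_zero, one_mul] at expansion
    exact expansion
  rw [eq_neg_of_add_eq_zero_left relation]
  exact neg_mem (sum_mem fun i _ => Submodule.smul_mem _ _ (Submodule.subset_span ⟨i, rfl⟩))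

theorem stmt10_general [Ring.KrullDimLE 0 R] [LinearOrder ι] [Finite ι] (A : Matrix (Fin r) ι R)
    (hA : LinearIndependent R A) (y : ι → R) :
    y ∈ Submodule.span R (Set.range A) ↔
      ∀ g : Fin (r + 1) → ι, StrictMono g →
        ((Matrix.of (Fin.cons y A)).submatrix id g).det = 0 := by
  refine ⟨fun hy g _ => det_submatrix_cons_eq_zero_of_mem_span hy g, fun h => ?_⟩
  have one_mem : (1 : R) ∈ (Submodule.span R (Set.range A)).colon {y} :=
    maximalMinorIdeal_le_colon (det_submatrix_eq_zero_of_strictMono h)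
      (maximalMinorIdeal_eq_top hA ▸ Submodule.mem_top)
  simpa only [Submodule.mem_colon_singleton, one_smul] using one_mem

end Minors

/-- Over a finite commutative principal ideal ring, if the rows of `A` are
linearly independent, then `y` lies in the row span of `A` iff all `(r+1)×(r+1)` minors of
the matrix obtained by stacking `y` on top of `A` vanish. -/
theorem stmt10 (R : Type*) [CommRing R] [Fintype R] [IsPrincipalIdealRing R]
    (r n : ℕ) (A : Matrix (Fin r) (Fin n) R) (hA : LinearIndependent R A)
    (y : Fin n → R) :
    y ∈ Submodule.span R (Set.range A) ↔
      ∀ g : Fin (r + 1) → Fin n, StrictMono g →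
        ((Matrix.of (Fin.cons y A)).submatrix id g).det = 0 :=
  stmt10_general A hA y
end

section
/- Let R be a finite commutative principal ideal ring, M_0, M_1, …, M_k ∈ R^{m×n}, x_1, …, x_k ∈ R, and set M_x = M_0 + Σ x_i M_i. Then rk(M_x) ≤ r if and only if there exists Z ∈ R^{n×(n−r)} with linearly independent columns such that M_x · Z = 0. -/
/-!
The key point is that over a principal ideal ring every linear form on a free module of positive
rank is a multiple `d • ψ` of a surjective form `ψ`: when `range ψ` is chosen maximal, it is an
idempotent ideal, so generated by an idempotent, and a form with values in the complementary factor
of the ring can be added to `ψ`. Moreover, the kernel of a surjective form on a free module of rank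
`n + 1` is free of rank `n`.

Replacing `r` forms on a free module of rank `n` one after the other by the kernels of their
surjective parts gives `n - r` independent common zeros. Applied to the dual module, this shows that
a submodule with `r` generators is annihilated by `n - r` independent forms. Conversely, if the
forms are independent then each `d` is a nonzerodivisor, `d • ψ` and `ψ` have the same kernel, and
the common kernel of `n - r` independent forms is free of rank `n - (n - r) ≤ r`; by induction on
the rank, each of its submodules is generated by that many elements.
-/

open Function Module
open scoped Matrix

section LinearForms

variable {R M : Type*} [CommRing R] [AddCommGroup M] [Module R M]

theorem exists_eq_smul_of_range_le_span_singleton [Projective R M] {φ : Dual R M} {g : R}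
    (h : LinearMap.range φ ≤ Submodule.span R {g}) : ∃ ψ : Dual R M, φ = g • ψ := by
  rw [← LinearMap.range_toSpanSingleton] at h
  obtain ⟨ψ, hψ⟩ := projective_lifting_property (LinearMap.toSpanSingleton R R g).rangeRestrict
    (φ.codRestrict _ fun x ↦ h ⟨x, rfl⟩) (LinearMap.surjective_rangeRestrict _)
  refine ⟨ψ, LinearMap.ext fun x ↦ ?_⟩
  have hx : ψ x * g = φ x := congrArg Subtype.val (LinearMap.congr_fun hψ x)
  rw [← hx, LinearMap.smul_apply, smul_eq_mul, mul_comm]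

theorem exists_eq_smul_and_isIdempotentElem_range [IsPrincipalIdealRing R] [Projective R M]
    (φ : Dual R M) :
    ∃ (d : R) (ψ : Dual R M), φ = d • ψ ∧ IsIdempotentElem (LinearMap.range ψ : Ideal R) := by
  obtain ⟨I, ⟨d, ψ, hφ, rfl⟩, hmax⟩ := exists_maximal_of_wellFoundedGT
    (fun I : Ideal R ↦ ∃ (d : R) (ψ : Dual R M), φ = d • ψ ∧ LinearMap.range ψ = I)
    ⟨_, 1, φ, (one_smul R φ).symm, rfl⟩
  obtain ⟨g, hg⟩ := (IsPrincipalIdealRing.principal (LinearMap.range ψ)).principal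
  obtain ⟨χ, rfl⟩ := exists_eq_smul_of_range_le_span_singleton hg.le
  have hle : LinearMap.range (g • χ) ≤ LinearMap.range χ := by
    rintro _ ⟨x, rfl⟩
    exact ⟨g • x, map_smul χ g x⟩
  have hχ : LinearMap.range χ ≤ LinearMap.range (g • χ) :=
    hmax ⟨d * g, χ, by rw [hφ, mul_smul], rfl⟩ hle
  -- Both `g • χ` and `χ` have range `(g)`, so `(g) = g • range χ = (g) * (g)`.
  refine ⟨d, g • χ, hφ, le_antisymm Ideal.mul_le_left ?_⟩
  rintro _ ⟨x, rfl⟩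
  exact Ideal.mul_mem_mul (hg ▸ Submodule.mem_span_singleton_self g) (hχ ⟨x, rfl⟩)

theorem exists_eq_smul_and_surjective [IsPrincipalIdealRing R] [Projective R M] (φ : Dual R M)
    {χ : Dual R M} (hχ : Surjective χ) :
    ∃ (d : R) (ψ : Dual R M), φ = d • ψ ∧ Surjective ψ := by
  obtain ⟨d, ψ, rfl, hψ⟩ := exists_eq_smul_and_isIdempotentElem_range φ
  obtain ⟨e, he, hrange⟩ := (Ideal.isIdempotentElem_iff_of_fg _ (IsNoetherian.noetherian _)).1 hψ
  have he_mul (x : M) : e * ψ x = ψ x := by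
    obtain ⟨c, hc⟩ := Submodule.mem_span_singleton.1 (hrange ▸ LinearMap.mem_range_self ψ x)
    rw [← hc, smul_eq_mul, mul_left_comm, he.eq]
  obtain ⟨u, hu⟩ : e ∈ LinearMap.range ψ := hrange ▸ Submodule.mem_span_singleton_self e
  obtain ⟨v, hv⟩ := hχ 1
  refine ⟨d * e, ψ + (1 - e) • χ, LinearMap.ext fun x ↦ ?_, ?_⟩
  · simp only [LinearMap.smul_apply, LinearMap.add_apply, smul_eq_mul]
    linear_combination (-d) * he_mul x + d * χ x * he.eq
  · refine LinearMap.range_eq_top.1 ((Ideal.eq_top_iff_one _).2 ⟨e • u + (1 - e) • v, ?_⟩)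
    simp only [map_add, map_smul, LinearMap.add_apply, LinearMap.smul_apply, smul_eq_mul, hu, hv]
    linear_combination (2 - χ u) * he.eq - he_mul v

theorem coord_surjective {ι : Type*} (b : Basis ι R M) (i : ι) : Surjective (b.coord i) :=
  fun x ↦ ⟨x • b i, by simp⟩

theorem dual_prod_apply (φ : Dual R (R × M)) (x : R) (y : M) :
    φ (x, y) = φ (1, 0) * x + φ (0, y) := by
  rw [mul_comm, ← smul_eq_mul, ← map_smul, ← map_add]
  simp

theorem nonempty_ker_equiv_prod_ker {φ : Dual R (R × M)} (hφ : Surjective φ) {a d : R}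
    {ψ : Dual R M} (hψ : Surjective ψ) (h : ∀ x y, φ (x, y) = a * x + d * ψ y) :
    Nonempty (LinearMap.ker φ ≃ₗ[R] R × LinearMap.ker ψ) := by
  obtain ⟨u, hu⟩ := hψ 1
  obtain ⟨⟨s, w⟩, hsw⟩ := hφ 1
  rw [h] at hsw
  -- `R × M = (R × R u) ⊕ ker ψ`, and `φ` is `(x, t u) ↦ a x + d t` on the first summand; since `a`
  -- and `d` are coprime, the solutions of `a x + d t = 0` are the multiples of `(-d, a)`.
  let f : R × LinearMap.ker ψ →ₗ[R] R × M :=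
    (LinearMap.toSpanSingleton R (R × M) (-d, a • u)).coprod
      (LinearMap.inr R R M ∘ₗ (LinearMap.ker ψ).subtype)
  have hf_apply (c : R) (y : LinearMap.ker ψ) : f (c, y) = (-(c * d), (c * a) • u + y) := by
    simp [f, mul_smul]
  have hf_inj : Injective f := by
    refine (injective_iff_map_eq_zero f).2 ?_
    rintro ⟨c, y⟩ hcy
    rw [hf_apply, Prod.mk_eq_zero, neg_eq_zero] at hcy
    obtain ⟨hcd, hy⟩ := hcy
    have hca : c * a = 0 := by simpa [hu] using congrArg ψ hy
    have hc : c = 0 := by linear_combination -c * hsw + s * hca + ψ w * hcd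
    simpa [hc] using hy
  have hf_range : LinearMap.range f = LinearMap.ker φ := by
    apply le_antisymm
    · rintro _ ⟨⟨c, y⟩, rfl⟩
      rw [LinearMap.mem_ker, hf_apply, h, map_add, map_smul, y.2, hu, smul_eq_mul]
      ring
    · rintro ⟨x, y⟩ hxy
      rw [LinearMap.mem_ker, h] at hxy
      have hx : -((s * ψ y - ψ w * x) * d) = x := by linear_combination x * hsw - s * hxy
      have hy : (s * ψ y - ψ w * x) * a = ψ y := by linear_combination ψ y * hsw - ψ w * hxy
      refine ⟨(s * ψ y - ψ w * x, ⟨y - ψ y • u, by simp [hu]⟩), ?_⟩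
      rw [hf_apply, hx, hy, add_sub_cancel]
  exact ⟨((LinearEquiv.ofInjective f hf_inj).trans (LinearEquiv.ofEq _ _ hf_range)).symm⟩

theorem nonempty_ker_equiv_pi [IsPrincipalIdealRing R] {n : ℕ} {φ : Dual R (Fin (n + 1) → R)}
    (hφ : Surjective φ) : Nonempty (LinearMap.ker φ ≃ₗ[R] (Fin n → R)) := by
  induction n with
  | zero =>
    let e := LinearEquiv.funUnique (Fin 1) R R
    have hφe : Injective (φ ∘ₗ e.symm.toLinearMap) :=
      OrzechProperty.injective_of_surjective_endomorphism _ (hφ.comp e.symm.surjective)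
    rw [LinearMap.ker_eq_bot.2 ((Injective.of_comp_iff' φ e.symm.bijective).1 hφe)]
    exact ⟨0⟩
  | succ n ih =>
    let cons (m : ℕ) := Fin.consLinearEquiv R fun _ : Fin (m + 1) ↦ R
    obtain ⟨d, ψ, hd, hψ⟩ :=
      exists_eq_smul_and_surjective (φ ∘ₗ (cons (n + 1)).toLinearMap ∘ₗ LinearMap.inr R R _)
        (coord_surjective (Pi.basisFun R (Fin (n + 1))) 0)
    obtain ⟨f⟩ := nonempty_ker_equiv_prod_ker (φ := φ ∘ₗ (cons (n + 1)).toLinearMap)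
      (hφ.comp (cons (n + 1)).surjective) hψ
      fun x y ↦ (dual_prod_apply _ x y).trans (congrArg _ (LinearMap.congr_fun hd y))
    obtain ⟨g⟩ := ih hψ
    exact ⟨((cons (n + 1)).ofSubmodule' (LinearMap.ker φ)).symm.trans <| f.trans <|
      ((LinearEquiv.refl R R).prodCongr g).trans (cons n)⟩

theorem nonempty_basis_ker [IsPrincipalIdealRing R] {n : ℕ} (b : Basis (Fin (n + 1)) R M)
    {φ : Dual R M} (hφ : Surjective φ) : Nonempty (Basis (Fin n) R (LinearMap.ker φ)) := by
  obtain ⟨e⟩ := nonempty_ker_equiv_pi (φ := φ ∘ₗ b.equivFun.symm.toLinearMap)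
    (hφ.comp b.equivFun.symm.surjective)
  exact ⟨.ofEquivFun ((b.equivFun.symm.ofSubmodule' (LinearMap.ker φ)).symm.trans e)⟩

theorem exists_eq_smul_and_surjective_and_basis_ker [IsPrincipalIdealRing R] {n : ℕ}
    (b : Basis (Fin (n + 1)) R M) (φ : Dual R M) :
    ∃ (d : R) (ψ : Dual R M), φ = d • ψ ∧ Surjective ψ ∧
      Nonempty (Basis (Fin n) R (LinearMap.ker ψ)) := by
  have := Projective.of_basis b
  obtain ⟨d, ψ, hd, hψ⟩ := exists_eq_smul_and_surjective φ (coord_surjective b 0)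
  exact ⟨d, ψ, hd, hψ, nonempty_basis_ker b hψ⟩

theorem exists_span_range_eq [IsPrincipalIdealRing R] {n : ℕ} (b : Basis (Fin n) R M)
    (N : Submodule R M) : ∃ v : Fin n → M, Submodule.span R (Set.range v) = N := by
  induction n generalizing M with
  | zero =>
    have : Subsingleton M := b.equivFun.toEquiv.subsingleton
    exact ⟨0, Subsingleton.elim _ _⟩
  | succ n ih =>
    obtain ⟨b'⟩ := nonempty_basis_ker b (coord_surjective b 0)
    obtain ⟨v, hv⟩ := ih b' (N.comap (LinearMap.ker (b.coord 0)).subtype)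
    obtain ⟨d, hd⟩ := (IsPrincipalIdealRing.principal (N.map (b.coord 0))).principal
    obtain ⟨w, hwN, hw⟩ : d ∈ N.map (b.coord 0) := hd ▸ Submodule.mem_span_singleton_self d
    refine ⟨Fin.cons w (Subtype.val ∘ v), ?_⟩
    have hker : Submodule.span R (Set.range (Subtype.val ∘ v)) = LinearMap.ker (b.coord 0) ⊓ N := by
      rw [← Submodule.map_comap_subtype, ← hv, Submodule.map_span, Submodule.coe_subtype,
        Set.range_comp]
    rw [Fin.range_cons, Submodule.span_insert, hker]
    refine le_antisymm (sup_le ((Submodule.span_singleton_le_iff_mem _ _).2 hwN) inf_le_right) ?_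
    intro x hx
    obtain ⟨c, hc⟩ := Submodule.mem_span_singleton.1 (hd ▸ Submodule.mem_map_of_mem hx)
    refine Submodule.mem_sup.2 ⟨c • w, Submodule.smul_mem _ _ (Submodule.mem_span_singleton_self w),
      x - c • w, ⟨?_, N.sub_mem hx (N.smul_mem c hwN)⟩, add_sub_cancel _ _⟩
    rw [SetLike.mem_coe, LinearMap.mem_ker, map_sub, map_smul, hw, hc, sub_self]

theorem exists_span_range_eq_of_le {R M : Type*} [Semiring R] [AddCommMonoid M] [Module R M]
    {k r : ℕ} (h : k ≤ r) (v : Fin k → M) :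
    ∃ w : Fin r → M, Submodule.span R (Set.range w) = Submodule.span R (Set.range v) := by
  refine ⟨Function.extend (Fin.castLE h) v 0, le_antisymm (Submodule.span_le.2 ?_) ?_⟩
  · refine (Set.range_extend_subset _ _ _).trans (Set.union_subset Submodule.subset_span ?_)
    rintro _ ⟨i, -, rfl⟩
    exact Submodule.zero_mem _
  · rw [Set.range_extend (Fin.castLE_injective h)]
    exact Submodule.span_mono Set.subset_union_left

theorem exists_linearIndependent_forall_apply_eq_zero [IsPrincipalIdealRing R] {n r : ℕ}
    (b : Basis (Fin n) R M) (φ : Fin r → Dual R M) :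
    ∃ z : Fin (n - r) → M, LinearIndependent R z ∧ ∀ i j, φ i (z j) = 0 := by
  induction r generalizing n M with
  | zero => exact ⟨b, b.linearIndependent, fun i ↦ i.elim0⟩
  | succ r ih =>
    cases n with
    | zero =>
      rw [Nat.zero_sub]
      exact ⟨Fin.elim0, linearIndependent_empty_type, fun _ j ↦ j.elim0⟩
    | succ n =>
      rw [Nat.add_sub_add_right]
      obtain ⟨d, ψ, hd, -, ⟨c⟩⟩ := exists_eq_smul_and_surjective_and_basis_ker b (φ 0)
      obtain ⟨z, hz, hφz⟩ := ih c fun i ↦ φ i.succ ∘ₗ (LinearMap.ker ψ).subtype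
      refine ⟨fun j ↦ z j, hz.map' _ (Submodule.ker_subtype _), Fin.cases (fun j ↦ ?_) hφz⟩
      rw [hd, LinearMap.smul_apply, (z j).2, smul_zero]

theorem exists_eq_smul_of_ker_le_ker {ψ χ : Dual R M} (hψ : Surjective ψ)
    (h : LinearMap.ker ψ ≤ LinearMap.ker χ) : ∃ c : R, χ = c • ψ := by
  obtain ⟨u, hu⟩ := hψ 1
  refine ⟨χ u, LinearMap.ext fun x ↦ ?_⟩
  have hx : χ (x - ψ x • u) = 0 := h (by simp [hu])
  rw [map_sub, map_smul, sub_eq_zero] at hx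
  rw [hx, LinearMap.smul_apply, smul_eq_mul, smul_eq_mul, mul_comm]

theorem mem_nonZeroDivisors_of_linearIndependent {ι : Type*} {v : ι → M}
    (hv : LinearIndependent R v) {i : ι} {d : R} {x : M} (h : v i = d • x) :
    d ∈ nonZeroDivisors R := by
  refine mem_nonZeroDivisors_iff_right.2 fun c hc ↦ hv.smul_left_injective i ?_
  simp only [h, smul_smul, hc, zero_mul]

theorem linearIndependent_comp_subtype_ker {s : ℕ} {φ : Fin (s + 1) → Dual R M}
    (hφ : LinearIndependent R φ) {d : R} {ψ : Dual R M} (hd : φ 0 = d • ψ) (hψ : Surjective ψ) :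
    LinearIndependent R fun i : Fin s ↦ φ i.succ ∘ₗ (LinearMap.ker ψ).subtype := by
  have hd_reg := mem_nonZeroDivisors_of_linearIndependent hφ hd
  rw [Fintype.linearIndependent_iff] at hφ ⊢
  intro c hc j
  obtain ⟨a, ha⟩ : ∃ a : R, ∑ i, c i • φ i.succ = a • ψ := by
    refine exists_eq_smul_of_ker_le_ker hψ fun x hx ↦ ?_
    simpa using LinearMap.congr_fun hc ⟨x, hx⟩
  have hdc : d * c j = 0 := by
    refine hφ (Fin.cons (-a) (d • c)) ?_ j.succ
    simp only [Fin.sum_univ_succ, Fin.cons_zero, Fin.cons_succ, hd, Pi.smul_apply, smul_assoc,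
      ← Finset.smul_sum, ha]
    module
  exact (mul_left_mem_nonZeroDivisors_eq_zero_iff hd_reg).1 hdc

theorem iInf_ker_succ_eq_map_subtype {s : ℕ} (φ : Fin (s + 1) → Dual R M) {K : Submodule R M}
    (hK : LinearMap.ker (φ 0) = K) :
    ⨅ i, LinearMap.ker (φ i) =
      (⨅ i : Fin s, LinearMap.ker (φ i.succ ∘ₗ K.subtype)).map K.subtype := by
  ext x
  simp [Fin.forall_fin_succ, ← hK, and_comm]

theorem nonempty_basis_iInf_ker [IsPrincipalIdealRing R] {n s : ℕ} (b : Basis (Fin n) R M)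
    {φ : Fin s → Dual R M} (hφ : LinearIndependent R φ) :
    Nonempty (Basis (Fin (n - s)) R (⨅ i, LinearMap.ker (φ i) : Submodule R M)) := by
  induction s generalizing n M with
  | zero =>
    rw [iInf_of_empty]
    exact ⟨b.map Submodule.topEquiv.symm⟩
  | succ s ih =>
    cases n with
    | zero =>
      have : Subsingleton M := b.equivFun.toEquiv.subsingleton
      rw [Nat.zero_sub]
      exact ⟨Basis.empty _⟩
    | succ n =>
      rw [Nat.add_sub_add_right]
      obtain ⟨d, ψ, hd, hψ, ⟨c⟩⟩ := exists_eq_smul_and_surjective_and_basis_ker b (φ 0)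
      obtain ⟨e⟩ := ih c (linearIndependent_comp_subtype_ker hφ hd hψ)
      have hker : LinearMap.ker (φ 0) = LinearMap.ker ψ := by
        ext x
        rw [hd, LinearMap.mem_ker, LinearMap.smul_apply, smul_eq_mul, LinearMap.mem_ker,
          mul_left_mem_nonZeroDivisors_eq_zero_iff (mem_nonZeroDivisors_of_linearIndependent hφ hd)]
      rw [iInf_ker_succ_eq_map_subtype φ hker]
      exact ⟨e.map (Submodule.equivSubtypeMap _ _)⟩

theorem mem_dualAnnihilator_span_range_iff {ι : Type*} (v : ι → M) (φ : Dual R M) :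
    φ ∈ (Submodule.span R (Set.range v)).dualAnnihilator ↔ ∀ i, φ (v i) = 0 := by
  rw [← SetLike.mem_coe, Submodule.coe_dualAnnihilator_span]
  exact Set.range_subset_iff

theorem exists_span_range_eq_iff_exists_dualAnnihilator [IsPrincipalIdealRing R] {n r : ℕ}
    (b : Basis (Fin n) R M) (N : Submodule R M) :
    (∃ v : Fin r → M, Submodule.span R (Set.range v) = N) ↔
      ∃ φ : Fin (n - r) → Dual R M, LinearIndependent R φ ∧ ∀ j, φ j ∈ N.dualAnnihilator := by
  constructor
  · rintro ⟨v, rfl⟩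
    obtain ⟨φ, hφ, hφv⟩ :=
      exists_linearIndependent_forall_apply_eq_zero b.dualBasis fun i ↦ Dual.eval R M (v i)
    exact ⟨φ, hφ, fun j ↦ (mem_dualAnnihilator_span_range_iff v (φ j)).2 fun i ↦ hφv i j⟩
  · rintro ⟨φ, hφ, hφN⟩
    obtain ⟨b'⟩ := nonempty_basis_iInf_ker b hφ
    set K := ⨅ j, LinearMap.ker (φ j)
    have hNK : N ≤ K := le_iInf fun j ↦ (Submodule.mem_dualAnnihilator (φ j)).1 (hφN j)
    obtain ⟨v, hv⟩ := exists_span_range_eq b' (N.comap K.subtype)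
    obtain ⟨w, hw⟩ := exists_span_range_eq_of_le (R := R) (show n - (n - r) ≤ r by lia)
      (K.subtype ∘ v)
    exact ⟨w, by rw [hw, Set.range_comp, ← Submodule.map_span, hv, Submodule.map_comap_subtype,
      inf_eq_right.2 hNK]⟩

end LinearForms

section Matrix

variable {R ι n : Type*} [CommRing R] [Fintype n]

theorem dotProductEquiv_mem_dualAnnihilator_span_range_iff [DecidableEq n] (A : Matrix ι n R)
    (z : n → R) :
    dotProductEquiv R n z ∈ (Submodule.span R (Set.range A)).dualAnnihilator ↔ A *ᵥ z = 0 :=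
  (mem_dualAnnihilator_span_range_iff A _).trans <| (forall_congr' fun i ↦ by
    rw [dotProductEquiv_apply_apply, dotProduct_comm]; rfl).trans funext_iff.symm

theorem mul_eq_zero_iff_forall_mulVec_transpose {κ : Type*} (A : Matrix ι n R)
    (Z : Matrix n κ R) : A * Z = 0 ↔ ∀ j, A *ᵥ Z.transpose j = 0 := by
  simp only [← Matrix.ext_iff, funext_iff]
  exact forall_comm

end Matrix

theorem stmt16_general {R ι : Type*} [CommRing R] [IsPrincipalIdealRing R] {n : ℕ} (r : ℕ)
    (A : Matrix ι (Fin n) R) :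
    (∃ v : Fin r → (Fin n → R),
        Submodule.span R (Set.range v) = Submodule.span R (Set.range A)) ↔
      ∃ Z : Matrix (Fin n) (Fin (n - r)) R, LinearIndependent R Z.transpose ∧ A * Z = 0 := by
  rw [exists_span_range_eq_iff_exists_dualAnnihilator (Pi.basisFun R (Fin n))]
  let e := dotProductEquiv R (Fin n)
  constructor
  · rintro ⟨φ, hφ, hφA⟩
    refine ⟨Matrix.transpose fun j ↦ e.symm (φ j), hφ.map' e.symm.toLinearMap e.symm.ker,
      (mul_eq_zero_iff_forall_mulVec_transpose A _).2 fun j ↦ ?_⟩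
    refine (dotProductEquiv_mem_dualAnnihilator_span_range_iff A (e.symm (φ j))).1 ?_
    exact (e.apply_symm_apply (φ j)).symm ▸ hφA j
  · rintro ⟨Z, hZ, hAZ⟩
    exact ⟨fun j ↦ e (Z.transpose j), hZ.map' e.toLinearMap e.ker, fun j ↦
      (dotProductEquiv_mem_dualAnnihilator_span_range_iff A _).2
        ((mul_eq_zero_iff_forall_mulVec_transpose A Z).1 hAZ j)⟩

/-- Kipnis–Shamir modeling: Over a finite commutative principal ideal ring,
`rk(M_x) ≤ r` iff there is `Z ∈ R^{n×(n-r)}` with linearly independent columns such that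
`M_x · Z = 0`, where `M_x = M_0 + ∑ x_i M_i`. -/
theorem stmt16 (R : Type*) [CommRing R] [Fintype R] [IsPrincipalIdealRing R]
    (m n k r : ℕ) (M₀ : Matrix (Fin m) (Fin n) R)
    (M : Fin k → Matrix (Fin m) (Fin n) R) (x : Fin k → R) :
    (∃ v : Fin r → (Fin n → R),
        Submodule.span R (Set.range v) =
          Submodule.span R (Set.range (M₀ + ∑ i : Fin k, x i • M i))) ↔
    (∃ Z : Matrix (Fin n) (Fin (n - r)) R,
        LinearIndependent R Z.transpose ∧ (M₀ + ∑ i : Fin k, x i • M i) * Z = 0) :=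
  stmt16_general r _
end
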